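/- Let γ > 0, let m ≥ 1, let f : ℝ^n → [0,∞) be a γ-concave function with compact support, and let E be an m-dimensional subspace of ℝ^n. Define F : E^⊥ → [0,∞) by F(y) = ∫_E f(y+z) dz (integration with respect to m-dimensional Lebesgue measure on E). Then F is γ/(mγ+1)-concave on E^⊥, i.e. F(λ y_1 + (1-λ) y_2) ≥ ( λ F(y_1)^{γ/(mγ+1)} + (1-λ) F(y_2)^{γ/(mγ+1)} )^{(mγ+1)/γ} for all 0 ≤ λ ≤ 1 and all y_1, y_2 ∈ E^⊥ with F(y_1)·F(y_2) ≠ 0. -/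

import Mathlib

open MeasureTheory Set
open scoped RealInnerProductSpace

/-! Each slice `z ↦ f (y + z)` is `γ`-concave on the `m`-dimensional space `E`, and the slice over a
convex combination of `y₁` and `y₂` dominates the corresponding power means of the slices over `y₁`
and `y₂`. The claim is thus an instance of the Borell–Brascamp–Lieb inequality. On the line, after
scaling both functions to have supremum one, that inequality follows from the one-dimensional
Brunn–Minkowski inequality for superlevel sets, and undoing the scaling costs exactly a Hölder
inequality for power means. Tonelli's theorem then raises the dimension, since the exponents
compose: `φ(a + b) = φ(b) ∘ φ(a)` for `φ(d) γ = γ / (d γ + 1)`. -/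

open Filter Function Module Topology
open scoped ENNReal Pointwise

section PowerMean

/-- The power mean `(s a ^ p + t b ^ p) ^ (1 / p)` in `[0, ∞]`. The weights `s` and `t` need not sum
to one, and negative weights count as zero. -/
noncomputable def powerMean (p s t : ℝ) (a b : ℝ≥0∞) : ℝ≥0∞ :=
  (ENNReal.ofReal s * a ^ p + ENNReal.ofReal t * b ^ p) ^ (1 / p)

variable {p q r s t : ℝ}

lemma powerMean_one (a b : ℝ≥0∞) :
    powerMean 1 s t a b = ENNReal.ofReal s * a + ENNReal.ofReal t * b := by
  simp [powerMean]

lemma powerMean_mono (hp : 0 < p) {a b a' b' : ℝ≥0∞} (ha : a ≤ a') (hb : b ≤ b') :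
    powerMean p s t a b ≤ powerMean p s t a' b' := by
  unfold powerMean
  gcongr

lemma powerMean_const_mul (hp : 0 < p) (c a b : ℝ≥0∞) :
    powerMean p s t (c * a) (c * b) = c * powerMean p s t a b := by
  unfold powerMean
  rw [ENNReal.mul_rpow_of_nonneg _ _ hp.le, ENNReal.mul_rpow_of_nonneg _ _ hp.le,
    mul_left_comm, mul_left_comm (ENNReal.ofReal t), ← mul_add,
    ENNReal.mul_rpow_of_nonneg _ _ (by positivity), ← ENNReal.rpow_mul,
    mul_one_div_cancel hp.ne', ENNReal.rpow_one]

lemma continuous_powerMean : Continuous fun z : ℝ≥0∞ × ℝ≥0∞ => powerMean p s t z.1 z.2 := by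
  have continuous_weighted (c : ℝ) : Continuous fun a : ℝ≥0∞ => ENNReal.ofReal c * a ^ p :=
    (ENNReal.continuous_const_mul ENNReal.ofReal_ne_top).comp ENNReal.continuous_rpow_const
  exact ENNReal.continuous_rpow_const.comp <|
    ((continuous_weighted s).comp continuous_fst).add
      ((continuous_weighted t).comp continuous_snd)

lemma powerMean_ne_top (hp : 0 < p) {a b : ℝ≥0∞} (ha : a ≠ ∞) (hb : b ≠ ∞) :
    powerMean p s t a b ≠ ∞ := by
  refine ENNReal.rpow_ne_top_of_nonneg (by positivity) (ENNReal.add_ne_top.2 ⟨?_, ?_⟩)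
  · exact ENNReal.mul_ne_top ENNReal.ofReal_ne_top (ENNReal.rpow_ne_top_of_nonneg hp.le ha)
  · exact ENNReal.mul_ne_top ENNReal.ofReal_ne_top (ENNReal.rpow_ne_top_of_nonneg hp.le hb)

lemma powerMean_ne_zero (hp : 0 < p) (hs : 0 < s) {a : ℝ≥0∞} (b : ℝ≥0∞) (ha : a ≠ 0) :
    powerMean p s t a b ≠ 0 := by
  simp [powerMean, hp.not_gt, hs.not_ge, ha]

lemma powerMean_ofReal (hp : 0 < p) (hs : 0 ≤ s) (ht : 0 ≤ t) {a b : ℝ} (ha : 0 ≤ a)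
    (hb : 0 ≤ b) :
    powerMean p s t (ENNReal.ofReal a) (ENNReal.ofReal b) =
      ENNReal.ofReal ((s * a ^ p + t * b ^ p) ^ (1 / p)) := by
  unfold powerMean
  rw [ENNReal.ofReal_rpow_of_nonneg ha hp.le, ENNReal.ofReal_rpow_of_nonneg hb hp.le,
    ← ENNReal.ofReal_mul hs, ← ENNReal.ofReal_mul ht,
    ← ENNReal.ofReal_add (by positivity) (by positivity),
    ENNReal.ofReal_rpow_of_nonneg (by positivity) (by positivity)]

lemma powerMean_mul_le (hp : 0 < p) (hpq : p < q) (hpqr : 1 / p = 1 / q + 1 / r)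
    (a b c d : ℝ≥0∞) :
    powerMean p s t (a * c) (b * d) ≤ powerMean q s t a b * powerMean r s t c d := by
  let μ : Measure Bool :=
    ENNReal.ofReal s • Measure.dirac true + ENNReal.ofReal t • Measure.dirac false
  have lintegral_eq (g : Bool → ℝ≥0∞) :
      ∫⁻ i, g i ∂μ = ENNReal.ofReal s * g true + ENNReal.ofReal t * g false := by
    simp [μ, lintegral_add_measure, lintegral_smul_measure]
  simpa [lintegral_eq, powerMean] using
    ENNReal.lintegral_Lp_mul_le_Lq_mul_Lr hp hpq hpqr μ (f := fun i => cond i a b)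
      (g := fun i => cond i c d) measurable_from_top.aemeasurable measurable_from_top.aemeasurable

end PowerMean

section RealLine

variable {s t : ℝ}

lemma volume_add_volume_le_of_isCompact {K L : Set ℝ} (hK : IsCompact K) (hL : IsCompact L)
    (hK₀ : K.Nonempty) (hL₀ : L.Nonempty) : volume K + volume L ≤ volume (K + L) := by
  obtain ⟨a, haK, ha⟩ := hK.exists_isGreatest hK₀
  obtain ⟨b, hbL, hb⟩ := hL.exists_isLeast hL₀
  have inter_subset : (b +ᵥ K) ∩ (a +ᵥ L) ⊆ {a + b} := by
    rintro _ ⟨⟨x, hx, rfl⟩, y, hy, hxy⟩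
    have hxa := ha hx
    have hby := hb hy
    simp only [vadd_eq_add, mem_singleton_iff] at hxy ⊢
    linarith
  calc volume K + volume L = volume (b +ᵥ K) + volume (a +ᵥ L) := by simp [measure_vadd]
    _ = volume ((b +ᵥ K) ∪ (a +ᵥ L)) := by
      refine (measure_union₀ (hL.vadd a).measurableSet.nullMeasurableSet ?_).symm
      exact measure_mono_null inter_subset (measure_singleton _)
    _ ≤ volume (K + L) := by
      refine measure_mono (union_subset ?_ (vadd_set_subset_add haK))
      rw [add_comm K L]
      exact vadd_set_subset_add hbL

theorem volume_add_volume_le {A B : Set ℝ} (hA : MeasurableSet A) (hB : MeasurableSet B)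
    (hA₀ : A.Nonempty) (hB₀ : B.Nonempty) : volume A + volume B ≤ volume (A + B) := by
  obtain ⟨a, ha⟩ := hA₀
  obtain ⟨b, hb⟩ := hB₀
  rw [hA.measure_eq_iSup_isCompact, hB.measure_eq_iSup_isCompact]
  simp only [iSup_and']
  refine ENNReal.biSup_add_biSup_le' ⟨∅, by simp⟩ ⟨∅, by simp⟩ fun K hK L hL => ?_
  calc volume K + volume L ≤ volume (insert a K) + volume (insert b L) := by
        gcongr <;> exact subset_insert _ _
    _ ≤ volume (insert a K + insert b L) :=
      volume_add_volume_le_of_isCompact (hK.2.insert a) (hL.2.insert b) (insert_nonempty _ _)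
        (insert_nonempty _ _)
    _ ≤ volume (A + B) :=
      measure_mono (add_subset_add (insert_subset ha hK.1) (insert_subset hb hL.1))

lemma lintegral_eq_setLIntegral_measure_lt {α : Type*} [MeasurableSpace α] (μ : Measure α)
    {u : α → ℝ≥0∞} (hu : AEMeasurable u μ) (hu_top : ∀ x, u x ≠ ∞) :
    ∫⁻ x, u x ∂μ = ∫⁻ r in Ioi (0 : ℝ), μ {x | ENNReal.ofReal r < u x} := by
  calc ∫⁻ x, u x ∂μ = ∫⁻ x, ENNReal.ofReal (u x).toReal ∂μ := by
        simp only [ENNReal.ofReal_toReal (hu_top _)]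
    _ = ∫⁻ r in Ioi (0 : ℝ), μ {x | r < (u x).toReal} :=
      lintegral_eq_lintegral_meas_lt μ (ae_of_all _ fun _ => ENNReal.toReal_nonneg)
        hu.ennreal_toReal
    _ = _ := setLIntegral_congr_fun measurableSet_Ioi fun r hr => by
      simp only [ENNReal.ofReal_lt_iff_lt_toReal (mem_Ioi.1 hr).le (hu_top _)]

lemma measurable_measure_ofReal_lt {α : Type*} [MeasurableSpace α] (μ : Measure α)
    (u : α → ℝ≥0∞) : Measurable fun r : ℝ => μ {x | ENNReal.ofReal r < u x} :=
  Antitone.measurable fun _ _ hr => measure_mono fun _ hx =>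
    (ENNReal.ofReal_le_ofReal hr).trans_lt hx

lemma lintegral_add_lintegral_le_of_min_le (hs : 0 ≤ s) (ht : 0 ≤ t) {u v w : ℝ → ℝ≥0∞}
    (hu : Measurable u) (hv : Measurable v) (hw : Measurable w)
    (huv : ⨆ x, u x = ⨆ x, v x) (hu_top : ⨆ x, u x ≠ ∞)
    (h : ∀ x y, u x ≠ 0 → v y ≠ 0 → min (u x) (v y) ≤ w (s * x + t * y)) :
    ENNReal.ofReal s * (∫⁻ x, u x) + ENNReal.ofReal t * (∫⁻ x, v x) ≤ ∫⁻ x, w x := by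
  set M := ⨆ x, u x
  have layer_cake {g : ℝ → ℝ≥0∞} (hg : Measurable g) (hgM : ∀ x, g x ≤ M) :
      ∫⁻ x, g x = ∫⁻ r in Ioi (0 : ℝ), volume {x | ENNReal.ofReal r < g x} :=
    lintegral_eq_setLIntegral_measure_lt _ hg.aemeasurable fun x =>
      ne_top_of_le_ne_top hu_top (hgM x)
  have huM : ∀ x, u x ≤ M := le_iSup u
  have hvM (x : ℝ) : v x ≤ M := huv ▸ le_iSup v x
  refine le_trans ?_ (lintegral_mono fun x => min_le_left (w x) M)
  rw [layer_cake hu huM, layer_cake hv hvM,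
    layer_cake (hw.min measurable_const) fun _ => min_le_right _ _,
    ← lintegral_const_mul _ (measurable_measure_ofReal_lt _ u),
    ← lintegral_const_mul _ (measurable_measure_ofReal_lt _ v),
    ← lintegral_add_left ((measurable_measure_ofReal_lt _ u).const_mul _)]
  refine lintegral_mono fun r => ?_
  by_cases hr : ENNReal.ofReal r < M
  · have nonempty_of_lt_iSup {g : ℝ → ℝ≥0∞} (hg : ENNReal.ofReal r < ⨆ x, g x) :
        {x | ENNReal.ofReal r < g x}.Nonempty := lt_iSup_iff.1 hg
    have superlevel_subset : s • {x | ENNReal.ofReal r < u x} + t • {x | ENNReal.ofReal r < v x} ⊆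
        {x | ENNReal.ofReal r < min (w x) M} := by
      rintro _ ⟨_, ⟨x, hx, rfl⟩, _, ⟨y, hy, rfl⟩, rfl⟩
      exact lt_min ((lt_min hx hy).trans_le (h x y (ne_bot_of_gt hx) (ne_bot_of_gt hy))) hr
    calc _ = volume (s • {x | ENNReal.ofReal r < u x}) +
            volume (t • {x | ENNReal.ofReal r < v x}) := by
          simp [abs_of_nonneg, hs, ht]
      _ ≤ volume (s • {x | ENNReal.ofReal r < u x} + t • {x | ENNReal.ofReal r < v x}) :=
        volume_add_volume_le ((measurableSet_lt measurable_const hu).const_smul₀ _)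
          ((measurableSet_lt measurable_const hv).const_smul₀ _)
          (nonempty_of_lt_iSup hr).smul_set (nonempty_of_lt_iSup (huv ▸ hr)).smul_set
      _ ≤ _ := measure_mono superlevel_subset
  · have superlevel_eq_empty {g : ℝ → ℝ≥0∞} (hg : ∀ x, g x ≤ M) :
        {x | ENNReal.ofReal r < g x} = ∅ :=
      eq_empty_of_forall_notMem fun x hx => hr (hx.trans_le (hg x))
    simp [superlevel_eq_empty huM, superlevel_eq_empty hvM]

lemma iSup_div_self {ι : Sort*} {u : ι → ℝ≥0∞} (h₀ : ⨆ x, u x ≠ 0) (h_top : ⨆ x, u x ≠ ∞) :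
    ⨆ x, u x / ⨆ x, u x = 1 := by
  rw [← ENNReal.iSup_div, ENNReal.div_self h₀ h_top]

lemma lintegral_eq_mul_lintegral_div {α : Type*} [MeasurableSpace α] {μ : Measure α} {c : ℝ≥0∞}
    (hc₀ : c ≠ 0) (hc_top : c ≠ ∞) (u : α → ℝ≥0∞) :
    ∫⁻ x, u x ∂μ = c * ∫⁻ x, u x / c ∂μ := by
  simp only [← lintegral_const_mul' _ _ hc_top, ENNReal.mul_div_cancel hc₀ hc_top]

lemma iSup_ne_zero_of_lintegral_ne_zero {α : Type*} [MeasurableSpace α] {μ : Measure α}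
    {u : α → ℝ≥0∞} (hu : ∫⁻ x, u x ∂μ ≠ 0) : ⨆ x, u x ≠ 0 := by
  contrapose! hu
  simp [ENNReal.iSup_eq_zero.1 hu]

lemma powerMean_lintegral_real_le_of_iSup_ne_top {γ : ℝ} (hγ : 0 < γ) (hs : 0 < s) (ht : 0 ≤ t)
    {u v w : ℝ → ℝ≥0∞} (hu : Measurable u) (hv : Measurable v) (hw : Measurable w)
    (h : ∀ x y, u x ≠ 0 → v y ≠ 0 → powerMean γ s t (u x) (v y) ≤ w (s * x + t * y))
    (hu₀ : ∫⁻ x, u x ≠ 0) (hv₀ : ∫⁻ x, v x ≠ 0) (hu_top : ⨆ x, u x ≠ ∞)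
    (hv_top : ⨆ x, v x ≠ ∞) :
    powerMean (γ / (γ + 1)) s t (∫⁻ x, u x) (∫⁻ x, v x) ≤ ∫⁻ x, w x := by
  set A := ⨆ x, u x
  set B := ⨆ x, v x
  have hA₀ : A ≠ 0 := iSup_ne_zero_of_lintegral_ne_zero hu₀
  have hB₀ : B ≠ 0 := iSup_ne_zero_of_lintegral_ne_zero hv₀
  set M := powerMean γ s t A B
  have hM_top : M ≠ ∞ := powerMean_ne_top hγ hu_top hv_top
  have hM₀ : M ≠ 0 := powerMean_ne_zero hγ hs B hA₀
  have hiSup_u : ⨆ x, u x / A = 1 := iSup_div_self hA₀ hu_top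
  have hiSup_v : ⨆ x, v x / B = 1 := iSup_div_self hB₀ hv_top
  have min_le_normalized (x y : ℝ) (hx : u x / A ≠ 0) (hy : v y / B ≠ 0) :
      min (u x / A) (v y / B) ≤ w (s * x + t * y) / M := by
    set c := min (u x / A) (v y / B)
    rw [ENNReal.le_div_iff_mul_le (.inl hM₀) (.inl hM_top)]
    calc c * M = powerMean γ s t (c * A) (c * B) := (powerMean_const_mul hγ _ _ _).symm
      _ ≤ powerMean γ s t (u x) (v y) :=
        powerMean_mono hγ (ENNReal.mul_le_of_le_div (min_le_left _ _))
          (ENNReal.mul_le_of_le_div (min_le_right _ _))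
      _ ≤ w (s * x + t * y) :=
        h x y (fun h₀ => hx (by simp [h₀])) (fun h₀ => hy (by simp [h₀]))
  rw [lintegral_eq_mul_lintegral_div hA₀ hu_top u, lintegral_eq_mul_lintegral_div hB₀ hv_top v,
    lintegral_eq_mul_lintegral_div hM₀ hM_top w]
  calc powerMean (γ / (γ + 1)) s t (A * ∫⁻ x, u x / A) (B * ∫⁻ x, v x / B)
    _ ≤ M * powerMean 1 s t (∫⁻ x, u x / A) (∫⁻ x, v x / B) := by
      refine powerMean_mul_le (by positivity) (div_lt_self hγ (by linarith)) ?_ _ _ _ _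
      field_simp
      ring
    _ = M * (ENNReal.ofReal s * (∫⁻ x, u x / A) + ENNReal.ofReal t * (∫⁻ x, v x / B)) := by
      rw [powerMean_one]
    _ ≤ M * ∫⁻ x, w x / M := by
      gcongr
      exact lintegral_add_lintegral_le_of_min_le hs.le ht (hu.div_const _) (hv.div_const _)
        (hw.div_const _) (hiSup_u.trans hiSup_v.symm) (by simp [hiSup_u]) min_le_normalized

lemma tendsto_lintegral_min_natCast {α : Type*} [MeasurableSpace α] {μ : Measure α}
    {u : α → ℝ≥0∞} (hu : AEMeasurable u μ) :
    Tendsto (fun k : ℕ => ∫⁻ x, min (u x) k ∂μ) atTop (𝓝 (∫⁻ x, u x ∂μ)) := by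
  refine lintegral_tendsto_of_tendsto_of_monotone (fun k => hu.min aemeasurable_const)
    (ae_of_all _ fun x i j hij => ?_) (ae_of_all _ fun x => ?_)
  · exact min_le_min_left _ (Nat.cast_le.2 hij)
  · simpa using (tendsto_const_nhds (x := u x)).min ENNReal.tendsto_nat_nhds_top

lemma powerMean_lintegral_real_le {γ : ℝ} (hγ : 0 < γ) (hs : 0 < s) (ht : 0 ≤ t)
    {u v w : ℝ → ℝ≥0∞} (hu : Measurable u) (hv : Measurable v) (hw : Measurable w)
    (h : ∀ x y, u x ≠ 0 → v y ≠ 0 → powerMean γ s t (u x) (v y) ≤ w (s * x + t * y))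
    (hu₀ : ∫⁻ x, u x ≠ 0) (hv₀ : ∫⁻ x, v x ≠ 0) :
    powerMean (γ / (γ + 1)) s t (∫⁻ x, u x) (∫⁻ x, v x) ≤ ∫⁻ x, w x := by
  have hu_lim := tendsto_lintegral_min_natCast (μ := volume) hu.aemeasurable
  have hv_lim := tendsto_lintegral_min_natCast (μ := volume) hv.aemeasurable
  refine le_of_tendsto ((continuous_powerMean.tendsto _).comp (hu_lim.prodMk_nhds hv_lim)) ?_
  filter_upwards [hu_lim.eventually_ne hu₀, hv_lim.eventually_ne hv₀] with k huk₀ hvk₀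
  have iSup_min_ne_top (g : ℝ → ℝ≥0∞) : ⨆ x, min (g x) k ≠ ∞ :=
    ne_top_of_le_ne_top (ENNReal.natCast_ne_top k) (iSup_le fun _ => min_le_right _ _)
  refine powerMean_lintegral_real_le_of_iSup_ne_top hγ hs ht (hu.min measurable_const)
    (hv.min measurable_const) hw (fun x y hx hy => ?_) huk₀ hvk₀ (iSup_min_ne_top u)
    (iSup_min_ne_top v)
  exact (powerMean_mono hγ (min_le_left _ _) (min_le_left _ _)).trans
    (h x y (fun h₀ => hx (by simp [h₀])) (fun h₀ => hy (by simp [h₀])))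

end RealLine

section BorellBrascampLieb

lemma exists_measurable_ge_ae_eq {α : Type*} [MeasurableSpace α] {μ : Measure α} {w : α → ℝ≥0∞}
    (hw : AEMeasurable w μ) : ∃ w' : α → ℝ≥0∞, Measurable w' ∧ w ≤ w' ∧ w' =ᵐ[μ] w := by
  classical
  have hN : μ (toMeasurable μ {x | w x ≠ hw.mk w x}) = 0 := by
    rw [measure_toMeasurable]
    exact hw.ae_eq_mk
  set N := toMeasurable μ {x | w x ≠ hw.mk w x}
  have eq_mk_of_notMem {x} (hx : x ∉ N) : w x = hw.mk w x :=
    of_not_not fun hne => hx (subset_toMeasurable μ _ hne)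
  refine ⟨N.piecewise (fun _ => ∞) (hw.mk w),
    measurable_const.piecewise (measurableSet_toMeasurable _ _) hw.measurable_mk, fun x => ?_, ?_⟩
  · by_cases hx : x ∈ N <;> simp [hx, eq_mk_of_notMem]
  · filter_upwards [measure_eq_zero_iff_ae_notMem.1 hN] with x hx
    simp [hx, eq_mk_of_notMem]

section Products

variable {E F : Type*} [AddCommGroup E] [Module ℝ E] [MeasurableSpace E]
  [AddCommGroup F] [Module ℝ F] [MeasurableSpace F]

/-- The Borell–Brascamp–Lieb inequality in dimension `d` for the measure `μ`: integrating functions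
related by power means of exponent `γ` yields power means of exponent `γ / (d γ + 1)`. The weights
`s` and `t` are not required to sum to one. -/
def BorellBrascampLieb (μ : Measure E) (d : ℕ) : Prop :=
  ∀ ⦃γ s t : ℝ⦄, 0 < γ → 0 < s → 0 < t → ∀ ⦃u v w : E → ℝ≥0∞⦄,
    Measurable u → Measurable v → Measurable w →
    (∀ x y, u x ≠ 0 → v y ≠ 0 → powerMean γ s t (u x) (v y) ≤ w (s • x + t • y)) →
    ∫⁻ x, u x ∂μ ≠ 0 → ∫⁻ x, v x ∂μ ≠ 0 →
    powerMean (γ / (d * γ + 1)) s t (∫⁻ x, u x ∂μ) (∫⁻ x, v x ∂μ) ≤ ∫⁻ x, w x ∂μ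

lemma borellBrascampLieb_of_unique [Unique E] (μ : Measure E) :
    BorellBrascampLieb μ 0 := by
  intro γ s t hγ _ _ u v w _ _ _ h hu₀ hv₀
  rw [lintegral_unique] at hu₀ hv₀
  simp only [lintegral_unique, Nat.cast_zero, zero_mul, zero_add, div_one]
  rw [mul_comm (u _), mul_comm (v _), mul_comm (w _), powerMean_const_mul hγ]
  gcongr
  simpa only [Subsingleton.elim (s • default + t • default) (default : E)] using
    h _ _ (left_ne_zero_of_mul hu₀) (left_ne_zero_of_mul hv₀)

lemma borellBrascampLieb_real : BorellBrascampLieb (volume : Measure ℝ) 1 := by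
  intro γ s t hγ hs ht u v w hu hv hw h hu₀ hv₀
  simpa using powerMean_lintegral_real_le hγ hs ht.le hu hv hw h hu₀ hv₀

lemma BorellBrascampLieb.prod {μ : Measure E} {ν : Measure F} [SFinite ν] {c d : ℕ}
    (hμ : BorellBrascampLieb μ c) (hν : BorellBrascampLieb ν d) :
    BorellBrascampLieb (μ.prod ν) (c + d) := by
  intro γ s t hγ hs ht u v w hu hv hw h
  rw [lintegral_prod _ hu.aemeasurable, lintegral_prod _ hv.aemeasurable,
    lintegral_prod _ hw.aemeasurable]
  intro hu₀ hv₀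
  have exponent_eq : γ / (d * γ + 1) / (c * (γ / (d * γ + 1)) + 1) =
      γ / ((c + d : ℕ) * γ + 1) := by
    push_cast
    field_simp
    ring
  rw [← exponent_eq]
  refine hμ (by positivity) hs ht hu.lintegral_prod_right' hv.lintegral_prod_right'
    hw.lintegral_prod_right' (fun x x' hx hx' => ?_) hu₀ hv₀
  exact hν hγ hs ht (hu.comp measurable_prodMk_left) (hv.comp measurable_prodMk_left)
    (hw.comp measurable_prodMk_left) (fun y y' => h (x, y) (x', y')) hx hx'

end Products

lemma BorellBrascampLieb.of_continuousLinearEquiv {E F : Type*}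
    [NormedAddCommGroup E] [NormedSpace ℝ E] [MeasurableSpace E] [BorelSpace E]
    [NormedAddCommGroup F] [NormedSpace ℝ F] [MeasurableSpace F] [BorelSpace F]
    [FiniteDimensional ℝ F] {μ : Measure E} {ν : Measure F} [μ.IsAddHaarMeasure]
    [ν.IsAddHaarMeasure] {d : ℕ}
    (hμ : BorellBrascampLieb μ d) (e : E ≃L[ℝ] F) : BorellBrascampLieb ν d := by
  have : (μ.map e).IsAddHaarMeasure := e.isAddHaarMeasure_map μ
  obtain ⟨c, hc⟩ : ∃ c : ℝ≥0∞, ν = c • μ.map e :=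
    ⟨_, Measure.isAddLeftInvariant_eq_smul ν (μ.map e)⟩
  have he : MeasurableEmbedding e := e.toHomeomorph.measurableEmbedding
  have lintegral_eq (g : F → ℝ≥0∞) : ∫⁻ x, g x ∂ν = c * ∫⁻ x, g (e x) ∂μ := by
    rw [hc, lintegral_smul_measure, he.lintegral_map, smul_eq_mul]
  intro γ s t hγ hs ht u v w hu hv hw h
  rw [lintegral_eq, lintegral_eq, lintegral_eq, powerMean_const_mul (by positivity)]
  intro hu₀ hv₀
  gcongr
  refine hμ hγ hs ht (hu.comp he.measurable) (hv.comp he.measurable) (hw.comp he.measurable)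
    (fun x y hx hy => ?_) (right_ne_zero_of_mul hu₀) (right_ne_zero_of_mul hv₀)
  simpa using h (e x) (e y) hx hy

lemma borellBrascampLieb_pi (m : ℕ) : BorellBrascampLieb (volume : Measure (Fin m → ℝ)) m := by
  induction m with
  | zero => exact borellBrascampLieb_of_unique _
  | succ m ih =>
    have e : ((Fin m → ℝ) × ℝ) ≃L[ℝ] (Fin (m + 1) → ℝ) :=
      ContinuousLinearEquiv.ofFinrankEq (by simp)
    exact (ih.prod borellBrascampLieb_real).of_continuousLinearEquiv e

variable {E : Type*} [NormedAddCommGroup E] [NormedSpace ℝ E] [FiniteDimensional ℝ E]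
  [MeasurableSpace E] [BorelSpace E] (μ : Measure E) [μ.IsAddHaarMeasure]

lemma borellBrascampLieb_finrank : BorellBrascampLieb μ (finrank ℝ E) :=
  (borellBrascampLieb_pi _).of_continuousLinearEquiv
    (ContinuousLinearEquiv.ofFinrankEq (by simp) : (Fin (finrank ℝ E) → ℝ) ≃L[ℝ] E)

theorem powerMean_lintegral_le_lintegral {γ s t : ℝ} (hγ : 0 < γ) (hs : 0 < s) (ht : 0 < t)
    (u v : E → ℝ≥0∞) {w : E → ℝ≥0∞} (hw : AEMeasurable w μ)
    (h : ∀ x y, u x ≠ 0 → v y ≠ 0 → powerMean γ s t (u x) (v y) ≤ w (s • x + t • y))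
    (hu₀ : ∫⁻ x, u x ∂μ ≠ 0) (hv₀ : ∫⁻ x, v x ∂μ ≠ 0) :
    powerMean (γ / (finrank ℝ E * γ + 1)) s t (∫⁻ x, u x ∂μ) (∫⁻ x, v x ∂μ) ≤
      ∫⁻ x, w x ∂μ := by
  obtain ⟨u', hu'_meas, hu'_le, hu'⟩ := exists_measurable_le_lintegral_eq (μ := μ) u
  obtain ⟨v', hv'_meas, hv'_le, hv'⟩ := exists_measurable_le_lintegral_eq (μ := μ) v
  obtain ⟨w', hw'_meas, hw'_ge, hw'⟩ := exists_measurable_ge_ae_eq hw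
  rw [hu'] at hu₀ ⊢
  rw [hv'] at hv₀ ⊢
  rw [← lintegral_congr_ae hw']
  refine borellBrascampLieb_finrank μ hγ hs ht hu'_meas hv'_meas hw'_meas (fun x y hx hy => ?_)
    hu₀ hv₀
  calc powerMean γ s t (u' x) (v' y) ≤ powerMean γ s t (u x) (v y) :=
        powerMean_mono hγ (hu'_le x) (hv'_le y)
    _ ≤ w (s • x + t • y) :=
      h x y (ne_bot_of_le_ne_bot hx (hu'_le x)) (ne_bot_of_le_ne_bot hy (hv'_le y))
    _ ≤ w' (s • x + t • y) := hw'_ge _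

end BorellBrascampLieb

section GammaConcave

/-- A real function is `γ`-concave if it dominates the power means of exponent `γ` of its nonzero
values along segments. Nonnegativity is not part of the definition. -/
def GammaConcave {V : Type*} [AddCommGroup V] [Module ℝ V] (γ : ℝ) (f : V → ℝ) : Prop :=
  ∀ x y, f x ≠ 0 → f y ≠ 0 → ∀ l : ℝ, 0 ≤ l → l ≤ 1 →
    (l * f x ^ γ + (1 - l) * f y ^ γ) ^ (1 / γ) ≤ f (l • x + (1 - l) • y)

namespace GammaConcave

variable {V : Type*} [AddCommGroup V] [Module ℝ V] {γ : ℝ} {f : V → ℝ}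

lemma of_forall_mem_Ioo (hγ : γ ≠ 0) (hf₀ : ∀ x, 0 ≤ f x)
    (h : ∀ x y, f x ≠ 0 → f y ≠ 0 → ∀ l ∈ Ioo (0 : ℝ) 1,
      (l * f x ^ γ + (1 - l) * f y ^ γ) ^ (1 / γ) ≤ f (l • x + (1 - l) • y)) :
    GammaConcave γ f := by
  intro x y hx hy l hl₀ hl₁
  rcases hl₀.eq_or_lt with rfl | hl₀
  · simp [Real.rpow_rpow_inv (hf₀ y) hγ]
  rcases hl₁.eq_or_lt with rfl | hl₁
  · simp [Real.rpow_rpow_inv (hf₀ x) hγ]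
  exact h x y hx hy l ⟨hl₀, hl₁⟩

lemma slice_le (hf : GammaConcave γ f) {E : Submodule ℝ V} {y y' : V} {z z' : E}
    (hz : f (y + z) ≠ 0) (hz' : f (y' + z') ≠ 0) {l : ℝ} (hl₀ : 0 ≤ l) (hl₁ : l ≤ 1) :
    (l * f (y + z) ^ γ + (1 - l) * f (y' + z') ^ γ) ^ (1 / γ) ≤
      f (l • y + (1 - l) • y' + (l • z + (1 - l) • z' : E)) := by
  have combination_eq : l • y + (1 - l) • y' + ((l • z + (1 - l) • z' : E) : V) =
      l • (y + (z : V)) + (1 - l) • (y' + (z' : V)) := by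
    push_cast
    module
  rw [combination_eq]
  exact hf _ _ hz hz' l hl₀ hl₁

lemma slice (hf : GammaConcave γ f) (E : Submodule ℝ V) (y : V) :
    GammaConcave γ fun z : E => f (y + z) := by
  intro z z' hz hz' l hl₀ hl₁
  simpa only [← add_smul, add_sub_cancel, one_smul] using hf.slice_le hz hz' hl₀ hl₁

lemma concaveOn_rpow (hf : GammaConcave γ f) (hγ : 0 < γ) (hf₀ : ∀ x, 0 ≤ f x) :
    ConcaveOn ℝ (support f) fun x => f x ^ γ := by
  have rpow_pos {x} (hx : x ∈ support f) : 0 < f x ^ γ :=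
    Real.rpow_pos_of_pos ((hf₀ x).lt_of_ne' hx) γ
  have mean_pos {x y} (hx : x ∈ support f) (hy : y ∈ support f) {a b : ℝ} (ha : 0 ≤ a)
      (hb : 0 ≤ b) (hab : a + b = 1) : 0 < a * f x ^ γ + b * f y ^ γ :=
    (convex_Ioi (0 : ℝ)) (rpow_pos hx) (rpow_pos hy) ha hb hab
  have mean_le {x y} (hx : x ∈ support f) (hy : y ∈ support f) {a b : ℝ} (ha : 0 ≤ a)
      (hb : 0 ≤ b) (hab : a + b = 1) :
      (a * f x ^ γ + b * f y ^ γ) ^ (1 / γ) ≤ f (a • x + b • y) := by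
    obtain rfl : b = 1 - a := by linarith
    exact hf x y hx hy a ha (by linarith)
  refine ⟨fun x hx y hy a b ha hb hab => ?_, fun x hx y hy a b ha hb hab => ?_⟩
  · exact ((Real.rpow_pos_of_pos (mean_pos hx hy ha hb hab) _).trans_le
      (mean_le hx hy ha hb hab)).ne'
  · have hmean := mean_pos hx hy ha hb hab
    simpa [Real.rpow_inv_rpow hmean.le hγ.ne'] using
      Real.rpow_le_rpow (by positivity) (mean_le hx hy ha hb hab) hγ.le

end GammaConcave

lemma bddAbove_image_of_concaveOn {V : Type*} [NormedAddCommGroup V] [NormedSpace ℝ V]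
    {S : Set V} {φ : V → ℝ} (hφ : ConcaveOn ℝ S φ) (hS : Bornology.IsBounded S)
    {x₀ : V} (hx₀ : x₀ ∈ S) (hcont : ContinuousAt φ x₀) : BddAbove (φ '' S) := by
  -- Shrinking `S` towards `x₀` moves it into a ball on which `φ < φ x₀ + 1`; by concavity, such a
  -- bound at the shrunk point bounds `φ` at the original point.
  obtain ⟨r, hr, φ_lt⟩ := Metric.eventually_nhds_iff.1
    (hcont.eventually (gt_mem_nhds (lt_add_one (φ x₀))))
  obtain ⟨D, hD, dist_lt⟩ := hS.subset_ball_lt 0 x₀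
  set t := r / (r + D)
  have ht₀ : 0 < t := by positivity
  have ht₁ : t ≤ 1 := div_le_one_of_le₀ (by linarith) (by positivity)
  have htD : t * D < r := by
    rw [div_mul_eq_mul_div, div_lt_iff₀ (by positivity)]
    nlinarith
  refine ⟨(φ x₀ + 1 - (1 - t) * φ x₀) / t, ?_⟩
  rintro _ ⟨x, hx, rfl⟩
  have shrunk_near : dist (t • x + (1 - t) • x₀) x₀ < r := by
    calc dist (t • x + (1 - t) • x₀) x₀ = t * dist x x₀ := by
          rw [dist_eq_norm, dist_eq_norm, ← Real.norm_of_nonneg ht₀.le, ← norm_smul,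
            Real.norm_of_nonneg ht₀.le]
          congr 1
          module
      _ ≤ t * D := by gcongr; exact (dist_lt hx).le
      _ < r := htD
  have concave_at_shrunk := hφ.2 hx hx₀ ht₀.le (sub_nonneg.2 ht₁) (by ring)
  have lt_at_shrunk := φ_lt shrunk_near
  simp only [smul_eq_mul] at concave_at_shrunk
  rw [le_div_iff₀ ht₀]
  linarith

namespace GammaConcave

variable {E : Type*} [NormedAddCommGroup E] [NormedSpace ℝ E] [FiniteDimensional ℝ E]
  {γ : ℝ} {f : E → ℝ}

lemma bddAbove_range (hf : GammaConcave γ f) (hγ : 0 < γ) (hf₀ : ∀ x, 0 ≤ f x)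
    (hf_supp : Bornology.IsBounded (support f)) (hf_int : (interior (support f)).Nonempty) :
    BddAbove (range f) := by
  obtain ⟨x₀, hx₀⟩ := hf_int
  have hconc := hf.concaveOn_rpow hγ hf₀
  obtain ⟨M, hM⟩ := bddAbove_image_of_concaveOn hconc hf_supp
    (interior_subset hx₀) (hconc.continuousOn_interior.continuousAt (isOpen_interior.mem_nhds hx₀))
  refine ⟨max 0 (M ^ γ⁻¹), ?_⟩
  rintro _ ⟨x, rfl⟩
  by_cases hx : f x = 0
  · simp [hx]
  refine le_max_of_le_right ?_
  rw [← Real.rpow_rpow_inv (hf₀ x) hγ.ne']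
  exact Real.rpow_le_rpow (Real.rpow_nonneg (hf₀ x) γ) (hM (mem_image_of_mem _ hx)) (by positivity)

variable [MeasurableSpace E] [BorelSpace E] (μ : Measure E) [μ.IsAddHaarMeasure]

lemma indicator_interior_support_ae_eq (hf : GammaConcave γ f) (hγ : 0 < γ) (hf₀ : ∀ x, 0 ≤ f x) :
    (interior (support f)).indicator f =ᵐ[μ] f := by
  filter_upwards [measure_eq_zero_iff_ae_notMem.1
    ((hf.concaveOn_rpow hγ hf₀).1.addHaar_frontier μ)] with x hx
  refine indicator_apply_eq_self.2 fun hx_int => ?_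
  by_contra hx_supp
  exact hx ⟨subset_closure hx_supp, hx_int⟩

lemma aestronglyMeasurable (hf : GammaConcave γ f) (hγ : 0 < γ) (hf₀ : ∀ x, 0 ≤ f x) :
    AEStronglyMeasurable f μ := by
  have hcont : ContinuousOn f (interior (support f)) := by
    simpa only [Real.rpow_rpow_inv (hf₀ _) hγ.ne'] using
      (hf.concaveOn_rpow hγ hf₀).continuousOn_interior.rpow_const (p := γ⁻¹)
        fun _ _ => .inr (by positivity)
  exact ((aestronglyMeasurable_indicator_iff measurableSet_interior).2
    (hcont.aestronglyMeasurable measurableSet_interior)).congr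
    (hf.indicator_interior_support_ae_eq μ hγ hf₀)

lemma integrable (hf : GammaConcave γ f) (hγ : 0 < γ) (hf₀ : ∀ x, 0 ≤ f x)
    (hf_supp : Bornology.IsBounded (support f)) : Integrable f μ := by
  rcases (interior (support f)).eq_empty_or_nonempty with h_empty | h_nonempty
  · have indicator_ae_eq := hf.indicator_interior_support_ae_eq μ hγ hf₀
    rw [h_empty, indicator_empty] at indicator_ae_eq
    exact (integrable_zero E ℝ μ).congr indicator_ae_eq
  obtain ⟨M, hM⟩ := hf.bddAbove_range hγ hf₀ hf_supp h_nonempty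
  rw [← integrableOn_iff_integrable_of_support_subset subset_rfl]
  refine IntegrableOn.of_bound hf_supp.measure_lt_top
    (hf.aestronglyMeasurable μ hγ hf₀).restrict M (ae_of_all _ fun x => ?_)
  rw [Real.norm_of_nonneg (hf₀ x)]
  exact hM (mem_range_self x)

end GammaConcave

end GammaConcave

section Marginal

lemma isBounded_support_slice {V : Type*} [NormedAddCommGroup V] [NormedSpace ℝ V] {f : V → ℝ}
    (hf : Bornology.IsBounded (support f)) (E : Submodule ℝ V) (y : V) :
    Bornology.IsBounded (support fun z : E => f (y + z)) :=
  ((isometry_add_left y).comp (isometry_subtype_coe (s := (E : Set V)))).antilipschitz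
    |>.isBounded_preimage hf

theorem marginal_gamma_concave_general {V : Type*} [NormedAddCommGroup V] [NormedSpace ℝ V]
    {γ : ℝ} (hγ : 0 < γ) {f : V → ℝ} (hf₀ : ∀ x, 0 ≤ f x)
    (hf_supp : Bornology.IsBounded (support f)) (hf : GammaConcave γ f)
    (E : Submodule ℝ V) [FiniteDimensional ℝ E] [MeasurableSpace E] [BorelSpace E]
    (μ : Measure E) [μ.IsAddHaarMeasure] :
    GammaConcave (γ / (finrank ℝ E * γ + 1)) fun y => ∫ z : E, f (y + z) ∂μ := by
  have marginal_nonneg (y : V) : 0 ≤ ∫ z : E, f (y + z) ∂μ := integral_nonneg fun _ => hf₀ _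
  have hslice (y : V) : GammaConcave γ fun z : E => f (y + z) := hf.slice E y
  have lintegral_slice (y : V) :
      ∫⁻ z : E, ENNReal.ofReal (f (y + z)) ∂μ = ENNReal.ofReal (∫ z : E, f (y + z) ∂μ) :=
    (ofReal_integral_eq_lintegral_ofReal ((hslice y).integrable μ hγ (fun _ => hf₀ _)
      (isBounded_support_slice hf_supp E y)) (ae_of_all _ fun _ => hf₀ _)).symm
  refine .of_forall_mem_Ioo (by positivity) marginal_nonneg fun y₁ y₂ hy₁ hy₂ l hl => ?_
  have hl' : 0 < 1 - l := sub_pos.2 hl.2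
  rw [← ENNReal.ofReal_le_ofReal_iff (marginal_nonneg _),
    ← powerMean_ofReal (by positivity) hl.1.le hl'.le (marginal_nonneg _) (marginal_nonneg _)]
  have lintegral_slice_ne_zero {y : V} (hy : ∫ z : E, f (y + z) ∂μ ≠ 0) :
      ∫⁻ z : E, ENNReal.ofReal (f (y + z)) ∂μ ≠ 0 := by
    simpa [lintegral_slice] using (marginal_nonneg y).lt_of_ne' hy
  simp only [← lintegral_slice]
  refine powerMean_lintegral_le_lintegral μ hγ hl.1 hl' _ _
    ((hslice _).aestronglyMeasurable μ hγ fun _ => hf₀ _).aemeasurable.ennreal_ofReal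
    (fun z z' hz hz' => ?_) (lintegral_slice_ne_zero hy₁) (lintegral_slice_ne_zero hy₂)
  rw [powerMean_ofReal hγ hl.1.le hl'.le (hf₀ _) (hf₀ _)]
  exact ENNReal.ofReal_le_ofReal <| hf.slice_le (fun h₀ => hz (by simp [h₀]))
    (fun h₀ => hz' (by simp [h₀])) hl.1.le hl.2.le

lemma setIntegral_hausdorffMeasure {X G : Type*} [EMetricSpace X] [MeasurableSpace X]
    [BorelSpace X] [NormedAddCommGroup G] [NormedSpace ℝ G] {S : Set X}
    (hS : MeasurableSet S) {d : ℝ} (hd : 0 ≤ d) (f : X → G) :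
    ∫ x in S, f x ∂μH[d] = ∫ x : S, f x ∂μH[d] := by
  have map_coe : Measure.map ((↑) : S → X) μH[d] = μH[d].restrict S := by
    simpa using (isometry_subtype_coe (s := S)).map_hausdorffMeasure (.inl hd)
  rw [← map_coe, (MeasurableEmbedding.subtype_coe hS).integral_map]

end Marginal

/-- **Marginals of γ-concave functions.** If `f : ℝⁿ → [0,∞)` is γ-concave with
compact support and `E` is an `m`-dimensional subspace, then the marginal
`F(y) = ∫_E f(y+z) dz` is `γ/(mγ+1)`-concave on `E^⊥`. -/
theorem marginal_gamma_concave
    (n : ℕ) (γ : ℝ) (hγ : 0 < γ) (m : ℕ) (hm : 1 ≤ m)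
    (f : EuclideanSpace ℝ (Fin n) → ℝ)
    (hf_nonneg : ∀ x, 0 ≤ f x)
    (hf_meas : Measurable f)
    (hf_supp : HasCompactSupport f)
    (hf_concave : ∀ x y : EuclideanSpace ℝ (Fin n), f x ≠ 0 → f y ≠ 0 →
      ∀ l : ℝ, 0 ≤ l → l ≤ 1 →
        (l * f x ^ γ + (1 - l) * f y ^ γ) ^ (1 / γ) ≤ f (l • x + (1 - l) • y))
    (E : Submodule ℝ (EuclideanSpace ℝ (Fin n))) (hE : Module.finrank ℝ E = m)
    (F : EuclideanSpace ℝ (Fin n) → ℝ)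
    (hF : ∀ y, F y = ∫ z in (E : Set (EuclideanSpace ℝ (Fin n))), f (y + z) ∂μH[(m : ℝ)]) :
    ∀ y₁ y₂ : EuclideanSpace ℝ (Fin n), y₁ ∈ Eᗮ → y₂ ∈ Eᗮ →
      F y₁ ≠ 0 → F y₂ ≠ 0 → ∀ l : ℝ, 0 ≤ l → l ≤ 1 →
        (l * F y₁ ^ (γ / (m * γ + 1)) + (1 - l) * F y₂ ^ (γ / (m * γ + 1))) ^
            ((m * γ + 1) / γ) ≤
          F (l • y₁ + (1 - l) • y₂) := by
  subst hE
  intro y₁ y₂ _ _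
  have hE_meas : MeasurableSet (E : Set (EuclideanSpace ℝ (Fin n))) :=
    E.closed_of_finiteDimensional.measurableSet
  obtain rfl : F = fun y => ∫ z : E, f (y + z) ∂μH[finrank ℝ E] :=
    funext fun y => (hF y).trans (setIntegral_hausdorffMeasure hE_meas (Nat.cast_nonneg _) _)
  simpa only [one_div_div] using marginal_gamma_concave_general hγ hf_nonneg
    (hf_supp.isBounded.subset (subset_tsupport f)) hf_concave E μH[finrank ℝ E] y₁ y₂
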